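/- Let O=(0,0), A=(0,1), C=(1,1) in ℝ², X := [O,A] ∪ [O,C], μ := H¹⌊X, and f := χ_{[O,A]}. Then the non-centered maximal function satisfies Mf(O) ≤ 2/(2+√2) < 1, while Mf(x) = 1 for every x ∈ [O,A] with x ≠ O; in particular, Mf : X → ℝ is not continuous at O. -/

import Mathlib

open MeasureTheory Metric Filter Topology
open scoped ENNReal

noncomputable section

/-- The point `O = (0,0)` in the plane. -/
def ptO : EuclideanSpace ℝ (Fin 2) := !₂[0, 0]
/-- The point `A = (0,1)` in the plane. -/
def ptA : EuclideanSpace ℝ (Fin 2) := !₂[0, 1]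
/-- The point `C = (1,1)` in the plane. -/
def ptC : EuclideanSpace ℝ (Fin 2) := !₂[1, 1]

/-- The space `X = [O,A] ∪ [O,C]`, the union of the two closed segments. -/
def Xsp : Set (EuclideanSpace ℝ (Fin 2)) := segment ℝ ptO ptA ∪ segment ℝ ptO ptC

/-- The measure `μ = H¹⌊X`, the `1`-dimensional Hausdorff measure restricted to `X`. -/
def μX : Measure (EuclideanSpace ℝ (Fin 2)) := (μH[1]).restrict Xsp

/-- The function `f = χ_{[O,A]}`. -/
def fX : EuclideanSpace ℝ (Fin 2) → ℝ≥0∞ := (segment ℝ ptO ptA).indicator 1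

/-- The non-centered maximal function of `f` on the metric measure space `(X, d₂, μ)`:
`Mf(x) = sup { (1/μ(B(z,r))) ∫_{B(z,r)} f dμ : z ∈ X, r > 0, x ∈ B(z,r) }`. -/
def Mmax (x : EuclideanSpace ℝ (Fin 2)) : ℝ≥0∞ :=
  ⨆ (z ∈ Xsp) (r : ℝ) (_ : 0 < r) (_ : x ∈ ball z r),
    (∫⁻ y in ball z r, fX y ∂μX) / μX (ball z r)

/-!
A ball centred on `X` that contains `O` cannot see `[O,A]` without seeing a definite proportion of
`[O,C]`: together with a point `x ∈ [O,A]` it contains the orthogonal projection of `x` onto the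
line through `O` and `C`. This projection scales lengths on `[O,A]` by `cos θ`, where `θ` is the
angle between the two segments, so averages of `f` over such balls are at most `1 / (1 + cos θ)`,
which is `2 / (2 + √2)` for `θ = π / 4`. A small ball around any other point of `[O,A]` misses
`[O,C]`, hence sees only `f = 1`.
-/

section Average

variable {α : Type*} [MeasurableSpace α] {μ : Measure α}

lemma setLAverage_le_of_le {f : α → ℝ≥0∞} {b : ℝ≥0∞} (s : Set α)
    (h : ∀ y, f y ≤ b) : ⨍⁻ y in s, f y ∂μ ≤ b :=
  (setLAverage_le_essSup s f).trans (essSup_le_of_ae_le b (ae_of_all μ h))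

lemma setLAverage_indicator_one_le {s t : Set α} {κ : ℝ≥0∞} (ht : MeasurableSet t)
    (h : κ * μ (s ∩ t) ≤ μ (s \ t)) :
    ⨍⁻ y in s, t.indicator 1 y ∂μ ≤ (1 + κ)⁻¹ := by
  have hs : (1 + κ) * μ (s ∩ t) ≤ μ s :=
    calc (1 + κ) * μ (s ∩ t) = μ (s ∩ t) + κ * μ (s ∩ t) := by rw [add_mul, one_mul]
      _ ≤ μ (s ∩ t) + μ (s \ t) := by gcongr
      _ = μ s := measure_inter_add_sdiff s ht
  rw [setLAverage_eq, lintegral_indicator_one ht, Measure.restrict_apply ht, Set.inter_comm,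
    ENNReal.le_inv_iff_mul_le, ← ENNReal.mul_div_right_comm, mul_comm]
  exact ENNReal.div_le_of_le_mul (by rwa [one_mul])

end Average

section NoncenteredMaximal

variable {α : Type*} [PseudoMetricSpace α] [MeasurableSpace α]

/-- The non-centered maximal function of `f` on the subspace `X`: the supremum of the averages of
`f` over the balls that contain the given point and have their centre in `X`. -/
def noncenteredMaximal (X : Set α) (μ : Measure α) (f : α → ℝ≥0∞) (x : α) : ℝ≥0∞ :=
  ⨆ (z ∈ X) (r : ℝ) (_ : 0 < r) (_ : x ∈ ball z r), ⨍⁻ y in ball z r, f y ∂μ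

variable {X : Set α} {μ : Measure α} {f : α → ℝ≥0∞} {x : α} {b : ℝ≥0∞}

lemma noncenteredMaximal_le
    (h : ∀ z ∈ X, ∀ r, x ∈ ball z r → ⨍⁻ y in ball z r, f y ∂μ ≤ b) :
    noncenteredMaximal X μ f x ≤ b :=
  iSup₂_le fun z hz => iSup_le fun r => iSup₂_le fun _ hx => h z hz r hx

lemma setLAverage_le_noncenteredMaximal {r : ℝ} (hx : x ∈ X) (hr : 0 < r) :
    ⨍⁻ y in ball x r, f y ∂μ ≤ noncenteredMaximal X μ f x :=
  le_iSup₂_of_le x hx <| le_iSup_of_le r <| le_iSup₂_of_le hr (mem_ball_self hr) le_rfl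

lemma noncenteredMaximal_eq_one [OpensMeasurableSpace α] {r : ℝ} (hx : x ∈ X) (hr : 0 < r)
    (hf : ∀ y, f y ≤ 1) (hf_ball : ∀ᵐ y ∂μ, y ∈ ball x r → f y = 1)
    (h0 : μ (ball x r) ≠ 0) (htop : μ (ball x r) ≠ ∞) :
    noncenteredMaximal X μ f x = 1 := by
  refine le_antisymm
    (noncenteredMaximal_le fun z _ r _ => setLAverage_le_of_le (ball z r) hf) ?_
  calc 1 = ⨍⁻ _ in ball x r, 1 ∂μ := (setLAverage_one h0 htop).symm
    _ = ⨍⁻ y in ball x r, f y ∂μ := (setLAverage_congr_fun_ae measurableSet_ball hf_ball).symm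
    _ ≤ noncenteredMaximal X μ f x := setLAverage_le_noncenteredMaximal hx hr

end NoncenteredMaximal

section Segment

variable {E : Type*} [AddCommGroup E] [Module ℝ E]

lemma segment_zero_eq_image (v : E) : segment ℝ 0 v = (fun t : ℝ => t • v) '' Set.Icc 0 1 := by
  simp only [segment_eq_image', zero_add, sub_zero]

variable [TopologicalSpace E] [IsTopologicalAddGroup E] [ContinuousSMul ℝ E] [T2Space E]

lemma isClosed_segment (x y : E) : IsClosed (segment ℝ x y) := by
  rw [segment_eq_image_lineMap]
  exact (isCompact_Icc.image AffineMap.lineMap_continuous).isClosed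

lemma not_continuousWithinAt_of_eqOn_openSegment {Y : Type*} [TopologicalSpace Y] [T1Space Y]
    {X : Set E} {g : E → Y} {x y : E} {b : Y} (hX : openSegment ℝ x y ⊆ X)
    (hg : ∀ u ∈ openSegment ℝ x y, g u = b) (hx : g x ≠ b) : ¬ ContinuousWithinAt g X x := by
  intro hcont
  have hmem : x ∈ closure (openSegment ℝ x y) :=
    closure_openSegment (𝕜 := ℝ) x y ▸ left_mem_segment ℝ x y
  have hgx : g x ∈ closure {b} := (hcont.mono hX).mem_closure hmem hg
  rw [closure_singleton] at hgx
  exact hx hgx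

end Segment

section HausdorffMeasure

variable {E : Type*} [NormedAddCommGroup E] [NormedSpace ℝ E] [MeasurableSpace E] [BorelSpace E]

lemma hausdorffMeasure_segment_zero_inter (v : E) (s : Set E) :
    μH[1] (segment ℝ 0 v ∩ s) =
      ‖v‖ₑ * μH[1] (Set.Icc 0 1 ∩ (fun t : ℝ => t • v) ⁻¹' s) := by
  rw [segment_zero_eq_image, ← Set.image_inter_preimage, hausdorffMeasure_smul_right_image]
  rfl

lemma mul_hausdorffMeasure_segment_zero_inter_le {a p : E} {s : Set E} {κ : ℝ≥0∞}
    (hκ : κ * ‖a‖ₑ = ‖p‖ₑ) (h : ∀ t : ℝ, t • a ∈ s → t • p ∈ s) :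
    κ * μH[1] (segment ℝ 0 a ∩ s) ≤ μH[1] (segment ℝ 0 p ∩ s) := by
  rw [hausdorffMeasure_segment_zero_inter, hausdorffMeasure_segment_zero_inter, ← mul_assoc, hκ]
  gcongr ‖p‖ₑ * μH[1] (_ ∩ ?_)
  exact h

lemma hausdorffMeasure_ball_inter_pos_of_convex {s : Set E} (hs : Convex ℝ s) {x y : E}
    (hx : x ∈ s) (hy : y ∈ s) (hxy : x ≠ y) {r : ℝ} (hr : 0 < r) : 0 < μH[1] (ball x r ∩ s) := by
  have hball : ball x r ∈ 𝓝 x := ball_mem_nhds x hr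
  obtain ⟨w, hwball, hw⟩ : (ball x r ∩ openSegment ℝ x y).Nonempty :=
    mem_closure_iff_nhds.1 (closure_openSegment (𝕜 := ℝ) x y ▸ left_mem_segment ℝ x y) _ hball
  have hxw : x ≠ w := by
    rintro rfl
    exact hxy (left_mem_openSegment_iff.1 hw)
  have hsub : segment ℝ x w ⊆ ball x r ∩ s :=
    ((convex_ball x r).inter hs).segment_subset ⟨mem_ball_self hr, hx⟩
      ⟨hwball, hs.openSegment_subset hx hy hw⟩
  calc 0 < edist x w := edist_pos.2 hxw
    _ = μH[1] (segment ℝ x w) := (hausdorffMeasure_segment x w).symm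
    _ ≤ μH[1] (ball x r ∩ s) := measure_mono hsub

end HausdorffMeasure

section Projection

variable {E : Type*} [NormedAddCommGroup E] [InnerProductSpace ℝ E]

open InnerProductGeometry
open scoped RealInnerProductSpace

lemma norm_smul_starProjection_sub_smul_le_max (K : Submodule ℝ E) [K.HasOrthogonalProjection]
    (a : E) (s t : ℝ) :
    ‖t • K.starProjection a - s • a‖ ≤ max ‖s • a‖ ‖t • a - s • a‖ := by
  set p := K.starProjection a
  have hpa : ⟪p, a⟫ = ‖p‖ ^ 2 := K.re_inner_starProjection_eq_normSq a
  have hp : ‖p‖ ^ 2 ≤ ‖a‖ ^ 2 := by gcongr; exact K.norm_starProjection_apply_le a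
  have hexpand : ‖t • p - s • a‖ ^ 2 = t * (t - 2 * s) * ‖p‖ ^ 2 + s ^ 2 * ‖a‖ ^ 2 := by
    rw [norm_sub_sq_real, norm_smul, norm_smul, inner_smul_left, inner_smul_right, hpa]
    simp only [mul_pow, Real.norm_eq_abs, sq_abs, conj_trivial]
    ring
  rcases le_total (t * (t - 2 * s)) 0 with hst | hst
  · refine le_max_of_le_left ((sq_le_sq₀ (norm_nonneg _) (norm_nonneg _)).1 ?_)
    calc ‖t • p - s • a‖ ^ 2 = t * (t - 2 * s) * ‖p‖ ^ 2 + s ^ 2 * ‖a‖ ^ 2 := hexpand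
      _ ≤ 0 + s ^ 2 * ‖a‖ ^ 2 := by
        gcongr
        exact mul_nonpos_of_nonpos_of_nonneg hst (sq_nonneg _)
      _ = ‖s • a‖ ^ 2 := by rw [norm_smul, mul_pow, Real.norm_eq_abs, sq_abs, zero_add]
  · refine le_max_of_le_right ((sq_le_sq₀ (norm_nonneg _) (norm_nonneg _)).1 ?_)
    calc ‖t • p - s • a‖ ^ 2 = t * (t - 2 * s) * ‖p‖ ^ 2 + s ^ 2 * ‖a‖ ^ 2 := hexpand
      _ ≤ t * (t - 2 * s) * ‖a‖ ^ 2 + s ^ 2 * ‖a‖ ^ 2 := by gcongr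
      _ = (t - s) ^ 2 * ‖a‖ ^ 2 := by ring
      _ = ‖t • a - s • a‖ ^ 2 := by
        rw [← sub_smul, norm_smul, mul_pow, Real.norm_eq_abs, sq_abs]

lemma smul_starProjection_mem_ball {K : Submodule ℝ E} [K.HasOrthogonalProjection]
    {a z : E} {r t : ℝ} (hz : z ∈ ℝ ∙ a ∨ z ∈ K) (h0 : 0 ∈ ball z r)
    (ha : t • a ∈ ball z r) : t • K.starProjection a ∈ ball z r := by
  rw [mem_ball, dist_eq_norm] at h0 ha ⊢
  rcases hz with hz | hz
  · obtain ⟨s, rfl⟩ := Submodule.mem_span_singleton.1 hz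
    rw [zero_sub, norm_neg] at h0
    exact (norm_smul_starProjection_sub_smul_le_max K a s t).trans_lt (max_lt h0 ha)
  · calc ‖t • K.starProjection a - z‖ = ‖K.starProjection (t • a - z)‖ := by
          rw [map_sub, map_smul, Submodule.starProjection_eq_self_iff.2 hz]
      _ ≤ ‖t • a - z‖ := K.norm_starProjection_apply_le _
      _ < r := ha

lemma norm_starProjection_span_singleton {a c : E} (h : 0 ≤ ⟪a, c⟫) :
    ‖(ℝ ∙ c).starProjection a‖ = Real.cos (angle a c) * ‖a‖ := by
  rcases eq_or_ne c 0 with rfl | hc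
  · simp
  rw [Submodule.starProjection_singleton, real_inner_comm, norm_smul, cos_angle,
    Real.norm_of_nonneg (by positivity)]
  rcases eq_or_ne a 0 with rfl | ha
  · simp
  simp only [RCLike.ofReal_real_eq_id, id_eq]
  field_simp

lemma segment_zero_starProjection_subset {a c : E} (h0 : 0 ≤ ⟪a, c⟫) (h1 : ⟪a, c⟫ ≤ ‖c‖ ^ 2) :
    segment ℝ 0 ((ℝ ∙ c).starProjection a) ⊆ segment ℝ 0 c := by
  refine (convex_segment 0 c).segment_subset (left_mem_segment ℝ 0 c) ?_
  rw [Submodule.starProjection_singleton, real_inner_comm, segment_zero_eq_image]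
  exact ⟨_, ⟨by positivity, div_le_one_of_le₀ h1 (by positivity)⟩, rfl⟩

end Projection

section Wedge

variable {E : Type*} [NormedAddCommGroup E] [InnerProductSpace ℝ E]

open InnerProductGeometry
open scoped RealInnerProductSpace

/-- The union of the segments from the origin to `a` and to `c`. -/
def wedge (a c : E) : Set E := segment ℝ 0 a ∪ segment ℝ 0 c

lemma segment_inter_segment_of_linearIndependent {a c : E} (h : LinearIndependent ℝ ![a, c]) :
    segment ℝ 0 a ∩ segment ℝ 0 c = {0} :=
  segment_inter_eq_endpoint_of_linearIndependent_sub ℝ (by simpa only [sub_zero] using h)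

lemma mem_span_singleton_of_mem_segment_zero {v z : E} (hz : z ∈ segment ℝ 0 v) :
    z ∈ ℝ ∙ v := by
  rw [segment_zero_eq_image] at hz
  obtain ⟨t, -, rfl⟩ := hz
  exact Submodule.smul_mem _ t (Submodule.mem_span_singleton_self v)

variable [MeasurableSpace E] [BorelSpace E] {a c : E}

/-- The non-centered maximal function of the characteristic function of `[0, a]` on `wedge a c`,
equipped with the one-dimensional Hausdorff measure. -/
def wedgeMaximal (a c : E) : E → ℝ≥0∞ :=
  noncenteredMaximal (wedge a c) (μH[1].restrict (wedge a c)) ((segment ℝ 0 a).indicator 1)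

lemma hausdorffMeasure_segment_inter_le_restrict_wedge_sdiff (h : LinearIndependent ℝ ![a, c])
    (s : Set E) :
    μH[1] (segment ℝ 0 c ∩ s) ≤ μH[1].restrict (wedge a c) (s \ segment ℝ 0 a) := by
  have : NullSingletonClass (μH[1] : Measure E) := Measure.nullSingletonClass_hausdorff E one_pos
  have hsub : (segment ℝ 0 c ∩ s) \ {0} ⊆ (s \ segment ℝ 0 a) ∩ wedge a c := by
    rintro x ⟨⟨hxc, hxs⟩, hx0⟩
    refine ⟨⟨hxs, fun hxa => hx0 ?_⟩, Or.inr hxc⟩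
    exact segment_inter_segment_of_linearIndependent h ▸ ⟨hxa, hxc⟩
  calc μH[1] (segment ℝ 0 c ∩ s) = μH[1] ((segment ℝ 0 c ∩ s) \ {0}) :=
        (measure_sdiff_null (measure_singleton 0)).symm
    _ ≤ μH[1] ((s \ segment ℝ 0 a) ∩ wedge a c) := measure_mono hsub
    _ ≤ μH[1].restrict (wedge a c) (s \ segment ℝ 0 a) := Measure.le_restrict_apply _ _

lemma wedgeMaximal_zero_le (h : LinearIndependent ℝ ![a, c]) (h0 : 0 ≤ ⟪a, c⟫)
    (h1 : ⟪a, c⟫ ≤ ‖c‖ ^ 2) :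
    wedgeMaximal a c 0 ≤ (1 + ENNReal.ofReal (Real.cos (angle a c)))⁻¹ := by
  set p := (ℝ ∙ c).starProjection a
  set κ := ENNReal.ofReal (Real.cos (angle a c))
  have hκ : κ * ‖a‖ₑ = ‖p‖ₑ := by
    rw [← ofReal_norm, ← ofReal_norm, ← ENNReal.ofReal_mul' (norm_nonneg a),
      norm_starProjection_span_singleton h0]
  refine noncenteredMaximal_le fun z hz r hball =>
    setLAverage_indicator_one_le (isClosed_segment 0 a).measurableSet ?_
  have hz' : z ∈ ℝ ∙ a ∨ z ∈ ℝ ∙ c :=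
    hz.imp mem_span_singleton_of_mem_segment_zero mem_span_singleton_of_mem_segment_zero
  calc κ * μH[1].restrict (wedge a c) (ball z r ∩ segment ℝ 0 a)
      ≤ κ * μH[1] (segment ℝ 0 a ∩ ball z r) := by
        rw [Set.inter_comm]
        gcongr
        exact Measure.restrict_le_self
    _ ≤ μH[1] (segment ℝ 0 p ∩ ball z r) :=
        mul_hausdorffMeasure_segment_zero_inter_le hκ fun _ =>
          smul_starProjection_mem_ball hz' hball
    _ ≤ μH[1] (segment ℝ 0 c ∩ ball z r) := by
        gcongr
        exact segment_zero_starProjection_subset h0 h1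
    _ ≤ μH[1].restrict (wedge a c) (ball z r \ segment ℝ 0 a) :=
        hausdorffMeasure_segment_inter_le_restrict_wedge_sdiff h _

lemma hausdorffMeasure_wedge_lt_top (a c : E) : μH[1] (wedge a c) < ∞ := by
  refine measure_union_lt_top ?_ ?_ <;>
  · rw [hausdorffMeasure_segment]
    exact edist_lt_top _ _

lemma wedgeMaximal_eq_one (h : LinearIndependent ℝ ![a, c]) {x : E} (hx : x ∈ segment ℝ 0 a)
    (hx0 : x ≠ 0) : wedgeMaximal a c x = 1 := by
  have hxc : x ∈ (segment ℝ 0 c)ᶜ := fun hxc =>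
    hx0 (segment_inter_segment_of_linearIndependent h ▸ ⟨hx, hxc⟩ : x ∈ ({0} : Set E))
  obtain ⟨r, hr, hball⟩ := isOpen_iff.1 (isClosed_segment 0 c).isOpen_compl x hxc
  have hwedge : MeasurableSet (wedge a c) :=
    ((isClosed_segment 0 a).union (isClosed_segment 0 c)).measurableSet
  refine noncenteredMaximal_eq_one (Or.inl hx) hr
    (Set.indicator_le_self' fun _ _ => zero_le) ?_ ?_ ?_
  · filter_upwards [ae_restrict_mem hwedge] with y hy hyr
    exact Set.indicator_of_mem (hy.resolve_right (hball hyr)) 1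
  · refine ne_of_gt ?_
    calc 0 < μH[1] (ball x r ∩ segment ℝ 0 a) :=
          hausdorffMeasure_ball_inter_pos_of_convex (convex_segment 0 a) hx
            (left_mem_segment ℝ 0 a) hx0 hr
      _ ≤ μH[1] (ball x r ∩ wedge a c) := by gcongr; exact Set.subset_union_left
      _ ≤ μH[1].restrict (wedge a c) (ball x r) := Measure.le_restrict_apply _ _
  · have : IsFiniteMeasure (μH[1].restrict (wedge a c)) :=
      isFiniteMeasure_restrict.2 (hausdorffMeasure_wedge_lt_top a c).ne
    exact measure_ne_top _ _

theorem Mmax_not_continuousAt_general (h : LinearIndependent ℝ ![a, c]) (h0 : 0 < ⟪a, c⟫)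
    (h1 : ⟪a, c⟫ ≤ ‖c‖ ^ 2) :
    wedgeMaximal a c 0 ≤ ENNReal.ofReal (1 + Real.cos (angle a c))⁻¹ ∧
    ENNReal.ofReal (1 + Real.cos (angle a c))⁻¹ < 1 ∧
    (∀ x ∈ segment ℝ 0 a, x ≠ 0 → wedgeMaximal a c x = 1) ∧
    ¬ ContinuousWithinAt (wedgeMaximal a c) (wedge a c) 0 := by
  have hcos : 0 < Real.cos (angle a c) := by
    rw [← cos_angle_mul_norm_mul_norm] at h0
    exact pos_of_mul_pos_left h0 (by positivity)
  have hle : wedgeMaximal a c 0 ≤ ENNReal.ofReal (1 + Real.cos (angle a c))⁻¹ := by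
    rw [ENNReal.ofReal_inv_of_pos (by positivity), ENNReal.ofReal_add zero_le_one hcos.le,
      ENNReal.ofReal_one]
    exact wedgeMaximal_zero_le h h0.le h1
  have hlt : ENNReal.ofReal (1 + Real.cos (angle a c))⁻¹ < 1 :=
    ENNReal.ofReal_lt_one.2 (inv_lt_one_of_one_lt₀ (lt_add_of_pos_right 1 hcos))
  have hone : ∀ x ∈ segment ℝ 0 a, x ≠ 0 → wedgeMaximal a c x = 1 :=
    fun _ => wedgeMaximal_eq_one h
  refine ⟨hle, hlt, hone, not_continuousWithinAt_of_eqOn_openSegment (y := a) (b := 1)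
    ((openSegment_subset_segment ℝ 0 a).trans Set.subset_union_left) (fun u hu => ?_)
    (hle.trans_lt hlt).ne⟩
  refine hone u (openSegment_subset_segment ℝ 0 a hu) ?_
  rintro rfl
  exact h.ne_zero 0 (left_mem_openSegment_iff.1 hu).symm

end Wedge

section Example

open InnerProductGeometry
open scoped RealInnerProductSpace

lemma ptO_eq_zero : ptO = 0 := by
  ext i
  fin_cases i <;> rfl

lemma Xsp_eq_wedge : Xsp = wedge ptA ptC := by
  rw [Xsp, wedge, ptO_eq_zero]

lemma Mmax_eq_wedgeMaximal : Mmax = wedgeMaximal ptA ptC := by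
  funext x
  simp only [Mmax, wedgeMaximal, noncenteredMaximal, setLAverage_eq, μX, fX, Xsp_eq_wedge,
    ptO_eq_zero]

lemma linearIndependent_ptA_ptC : LinearIndependent ℝ ![ptA, ptC] := by
  refine LinearIndependent.pair_iff.2 fun s t hst => ?_
  have h0 : t = 0 := by simpa [ptA, ptC] using congrArg (· 0) hst
  have h1 : s + t = 0 := by simpa [ptA, ptC] using congrArg (· 1) hst
  exact ⟨by linarith, h0⟩

lemma inner_ptA_ptC : ⟪ptA, ptC⟫ = 1 := by
  simp [ptA, ptC, PiLp.inner_apply, Fin.sum_univ_two]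

lemma norm_ptA : ‖ptA‖ = 1 := by
  simp [ptA, EuclideanSpace.norm_eq, Fin.sum_univ_two]

lemma norm_ptC : ‖ptC‖ = √2 := by
  simp [ptC, EuclideanSpace.norm_eq, Fin.sum_univ_two, one_add_one_eq_two]

lemma inv_one_add_cos_angle_ptA_ptC : (1 + Real.cos (angle ptA ptC))⁻¹ = 2 / (2 + √2) := by
  rw [cos_angle, inner_ptA_ptC, norm_ptA, norm_ptC]
  field_simp
  rw [mul_add, Real.mul_self_sqrt zero_le_two]
  ring

end Example

/-- The non-centered maximal function of `f = χ_{[O,A]}` on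
`(X, d₂, H¹⌊X)` satisfies `Mf(O) ≤ 2/(2+√2) < 1`, while `Mf(x) = 1` for every
`x ∈ [O,A]` with `x ≠ O`; in particular, `Mf` is not continuous at `O` (as a function
on the metric space `X`). -/
theorem Mmax_not_continuousAt :
    Mmax ptO ≤ ENNReal.ofReal (2 / (2 + Real.sqrt 2)) ∧
    ENNReal.ofReal (2 / (2 + Real.sqrt 2)) < 1 ∧
    (∀ x ∈ segment ℝ ptO ptA, x ≠ ptO → Mmax x = 1) ∧
    ¬ ContinuousWithinAt Mmax Xsp ptO := by
  have h := Mmax_not_continuousAt_general linearIndependent_ptA_ptC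
    (inner_ptA_ptC ▸ one_pos) (by rw [inner_ptA_ptC, norm_ptC]; norm_num)
  rwa [inv_one_add_cos_angle_ptA_ptC, ← Mmax_eq_wedgeMaximal, ← Xsp_eq_wedge, ← ptO_eq_zero] at h

end
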